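/- arXiv:2111.07289 — 2 statements merged into one kernel-verified Lean document; each statement's English description precedes it below -/
import Mathlib

section
/- There exist an ultrametric space (X,d) and disjoint infinite proximinal subsets A and B of X such that d(a,b) > dist(A,B) for all a ∈ A and b ∈ B; in particular, a pair of proximinal sets in an ultrametric space need not admit a best proximity pair. Concretely, if X = A ∪ B for disjoint infinite sets A, B and Φ : X → ℕ₊ is a surjection with Φ(A) the even positive integers and Φ(B) the odd positive integers, then the function d₁ defined by d₁(x,x) = 0, d₁(x,y) = 1 if x ≠ y and Φ(x) = Φ(y), and d₁(x,y) = max{1 + 1/Φ(x), 1 + 1/Φ(y)} if Φ(x) ≠ Φ(y), is an ultrametric on X, the sets A and B are proximinal in (X,d₁), dist(A,B) = 1, and d₁(a,b) > 1 for all a ∈ A and b ∈ B. -/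
open Set

/-- A semimetric on a set `X`: a symmetric, nonnegative distance function
vanishing exactly on the diagonal. -/
structure IsSemimetric {X : Type*} (d : X → X → ℝ) : Prop where
  nonneg : ∀ x y, 0 ≤ d x y
  symm : ∀ x y, d x y = d y x
  eq_zero_iff : ∀ x y, d x y = 0 ↔ x = y

/-- A metric: a semimetric satisfying the triangle inequality. -/
def IsMetric {X : Type*} (d : X → X → ℝ) : Prop :=
  IsSemimetric d ∧ ∀ x y z, d x y ≤ d x z + d z y

/-- An ultrametric: a semimetric satisfying the strong triangle inequality
(which implies the triangle inequality). -/
def IsUltrametric {X : Type*} (d : X → X → ℝ) : Prop :=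
  IsSemimetric d ∧ ∀ x y z, d x y ≤ max (d x z) (d z y)

/-- `dist(A,B) = inf {d a b : a ∈ A, b ∈ B}`. -/
noncomputable def SetDist {X : Type*} (d : X → X → ℝ) (A B : Set X) : ℝ :=
  sInf (Set.image2 d A B)

/-- `A` is proximinal in `(X,d)`: every point of `X` has a best approximation in `A`. -/
def Proximinal {X : Type*} (d : X → X → ℝ) (A : Set X) : Prop :=
  ∀ x : X, ∃ a ∈ A, d x a = sInf ((d x) '' A)

/-- `G` is the proximinal graph `G_{X,d}(A,B)`: a bipartite graph with (nonempty,
disjoint, proximinal) parts `A` and `B`, whose vertex set is `A ∪ B` (all other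
points of the ambient type are isolated and are not vertices of the graph), and in
which `a ∈ A` and `b ∈ B` are adjacent iff `d a b = dist(A,B)`. -/
structure ProximinalFor {X : Type*} (d : X → X → ℝ) (G : SimpleGraph X) (A B : Set X) : Prop where
  nonemptyA : A.Nonempty
  nonemptyB : B.Nonempty
  disj : Disjoint A B
  proxA : Proximinal d A
  proxB : Proximinal d B
  edges_between : ∀ u v, G.Adj u v → (u ∈ A ∧ v ∈ B) ∨ (u ∈ B ∧ v ∈ A)
  adj_iff : ∀ a ∈ A, ∀ b ∈ B, (G.Adj a b ↔ d a b = SetDist d A B)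

/-- `G` is a farthest graph for `(X,d)` with parts `A`, `B`: `a ∈ A` and `b ∈ B`
are adjacent iff `d a b = sup {d x y : x ∈ A, y ∈ B}`, i.e. iff `d a b` is an upper
bound of all the cross distances. -/
structure FarthestFor {X : Type*} (d : X → X → ℝ) (G : SimpleGraph X) (A B : Set X) : Prop where
  nonemptyA : A.Nonempty
  nonemptyB : B.Nonempty
  disj : Disjoint A B
  edges_between : ∀ u v, G.Adj u v → (u ∈ A ∧ v ∈ B) ∨ (u ∈ B ∧ v ∈ A)
  adj_iff : ∀ a ∈ A, ∀ b ∈ B, (G.Adj a b ↔ ∀ x ∈ A, ∀ y ∈ B, d x y ≤ d a b)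

universe u

/- Give each level set of `Φ` a weight above `c`, put distinct points of one level at distance `c`
and points of different levels at the larger of their weights. Let `C` be a set whose weights have
infimum `c`. A point `x` outside `C` has nearest points in `C`: at distance `c` if `C` meets the
level of `x`; otherwise no point of `C` is closer to `x` than the weight of `x`, and any point of
`C` of smaller weight is at exactly that distance. Two such sets without a common level are at
distance `c`, because weights close to `c` occur in both, yet all distances between them
exceed `c`. -/

open Filter Topology

theorem isGLB_image_of_frequently_of_tendsto {ι α : Type*} [TopologicalSpace α] [LinearOrder α]
    [OrderTopology α] {l : Filter ι} {r : ι → α} {c : α} {S : Set ι} (hc : ∀ i ∈ S, c ≤ r i)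
    (hS : ∃ᶠ i in l, i ∈ S) (hr : Tendsto r l (𝓝 c)) : IsGLB (r '' S) c :=
  isGLB_of_mem_closure (forall_mem_image.2 hc)
    (mem_closure_of_frequently_of_tendsto (hS.mono fun _ hi ↦ mem_image_of_mem r hi) hr)

theorem proximinal_of_forall_exists_forall_le {X : Type*} {d : X → X → ℝ} {C : Set X}
    (h : ∀ x, ∃ a ∈ C, ∀ y ∈ C, d x a ≤ d x y) : Proximinal d C := fun x ↦ by
  obtain ⟨a, haC, ha⟩ := h x
  have hleast : IsLeast (d x '' C) (d x a) := ⟨mem_image_of_mem _ haC, forall_mem_image.2 ha⟩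
  exact ⟨a, haC, hleast.csInf_eq.symm⟩

section LevelDist

variable {X ι : Type*} {Φ : X → ι} {r : ι → ℝ} {c : ℝ} {x y : X} {A B C : Set X}

open Classical in
/-- The distance `d₁` of the construction, for a general level map `Φ`: distinct points of the same
level are at distance `c`, and points of different levels at the larger of the weights `r` of their
levels. The paper's choice is `c = 1` and `r n = 1 + 1 / n`. -/
noncomputable def levelDist (Φ : X → ι) (r : ι → ℝ) (c : ℝ) (x y : X) : ℝ :=
  if x = y then 0 else if Φ x = Φ y then c else max (r (Φ x)) (r (Φ y))

theorem levelDist_self (x : X) : levelDist Φ r c x x = 0 :=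
  if_pos rfl

theorem levelDist_of_ne_of_eq (hxy : x ≠ y) (h : Φ x = Φ y) : levelDist Φ r c x y = c := by
  rw [levelDist, if_neg hxy, if_pos h]

theorem levelDist_of_ne (h : Φ x ≠ Φ y) :
    levelDist Φ r c x y = max (r (Φ x)) (r (Φ y)) := by
  rw [levelDist, if_neg (ne_of_apply_ne Φ h), if_neg h]

theorem eq_levelDist {d : X → X → ℝ} (hself : ∀ x, d x x = 0)
    (heq : ∀ x y, x ≠ y → Φ x = Φ y → d x y = c)
    (hne : ∀ x y, Φ x ≠ Φ y → d x y = max (r (Φ x)) (r (Φ y))) :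
    d = levelDist Φ r c := by
  funext x y
  by_cases hxy : x = y
  · rw [hxy, hself, levelDist_self]
  by_cases h : Φ x = Φ y
  · rw [heq x y hxy h, levelDist_of_ne_of_eq hxy h]
  · rw [hne x y h, levelDist_of_ne h]

theorem levelDist_comm (x y : X) : levelDist Φ r c x y = levelDist Φ r c y x := by
  classical exact if_congr eq_comm rfl (if_congr eq_comm rfl (max_comm _ _))

theorem weight_le_levelDist (h : Φ x ≠ Φ y) : r (Φ x) ≤ levelDist Φ r c x y :=
  (le_max_left _ _).trans_eq (levelDist_of_ne h).symm

theorem le_levelDist (hr : ∀ x, c ≤ r (Φ x)) (hxy : x ≠ y) : c ≤ levelDist Φ r c x y := by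
  by_cases h : Φ x = Φ y
  · rw [levelDist_of_ne_of_eq hxy h]
  · exact (hr x).trans (weight_le_levelDist h)

theorem levelDist_nonneg (hc : 0 ≤ c) (hr : ∀ x, c ≤ r (Φ x)) (x y : X) :
    0 ≤ levelDist Φ r c x y := by
  obtain rfl | hxy := eq_or_ne x y
  · rw [levelDist_self]
  · exact hc.trans (le_levelDist hr hxy)

theorem weight_le_max_levelDist (h : Φ x ≠ Φ y) (z : X) :
    r (Φ x) ≤ max (levelDist Φ r c x z) (levelDist Φ r c z y) := by
  by_cases hxz : Φ x = Φ z
  · rw [hxz] at h ⊢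
    exact le_max_of_le_right (weight_le_levelDist h)
  · exact le_max_of_le_left (weight_le_levelDist hxz)

theorem levelDist_le_max (hc : 0 ≤ c) (hr : ∀ x, c ≤ r (Φ x)) (x y z : X) :
    levelDist Φ r c x y ≤ max (levelDist Φ r c x z) (levelDist Φ r c z y) := by
  obtain rfl | hxy := eq_or_ne x y
  · rw [levelDist_self]
    exact le_max_of_le_left (levelDist_nonneg hc hr x z)
  obtain rfl | hxz := eq_or_ne x z
  · exact le_max_right _ _
  by_cases h : Φ x = Φ y
  · rw [levelDist_of_ne_of_eq hxy h]
    exact le_max_of_le_left (le_levelDist hr hxz)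
  · have hy := weight_le_max_levelDist (r := r) (c := c) (Ne.symm h) z
    rw [levelDist_comm y z, levelDist_comm z x, max_comm] at hy
    rw [levelDist_of_ne h]
    exact max_le (weight_le_max_levelDist h z) hy

theorem isUltrametric_levelDist (hc : 0 < c) (hr : ∀ x, c ≤ r (Φ x)) :
    IsUltrametric (levelDist Φ r c) where
  left :=
    { nonneg := levelDist_nonneg hc.le hr
      symm := levelDist_comm
      eq_zero_iff := fun x y ↦ by
        refine ⟨fun h ↦ ?_, fun h ↦ h ▸ levelDist_self x⟩
        by_contra hxy
        exact (hc.trans_le (le_levelDist hr hxy)).ne' h }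
  right := levelDist_le_max hc.le hr

theorem proximinal_levelDist (hc : 0 ≤ c) (hr : ∀ x, c ≤ r (Φ x))
    (hC : ∀ x, ∃ a ∈ C, r (Φ a) ≤ r (Φ x)) : Proximinal (levelDist Φ r c) C := by
  refine proximinal_of_forall_exists_forall_le fun x ↦ ?_
  by_cases hx : x ∈ C
  · refine ⟨x, hx, fun y _ ↦ ?_⟩
    rw [levelDist_self]
    exact levelDist_nonneg hc hr x y
  have hne : ∀ y ∈ C, x ≠ y := fun y hy ↦ (ne_of_mem_of_not_mem hy hx).symm
  by_cases hlevel : ∃ a ∈ C, Φ x = Φ a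
  · obtain ⟨a, ha, hxa⟩ := hlevel
    refine ⟨a, ha, fun y hy ↦ ?_⟩
    rw [levelDist_of_ne_of_eq (hne a ha) hxa]
    exact le_levelDist hr (hne y hy)
  · push Not at hlevel
    obtain ⟨a, ha, hax⟩ := hC x
    refine ⟨a, ha, fun y hy ↦ ?_⟩
    rw [levelDist_of_ne (hlevel a ha), max_eq_left hax]
    exact weight_le_levelDist (hlevel y hy)

theorem setDist_levelDist (hAB : Disjoint (Φ '' A) (Φ '' B))
    (hA : IsGLB (r '' (Φ '' A)) c) (hB : IsGLB (r '' (Φ '' B)) c) :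
    SetDist (levelDist Φ r c) A B = c := by
  have hne : ∀ a ∈ A, ∀ b ∈ B, Φ a ≠ Φ b := fun a ha b hb ↦
    hAB.ne_of_mem (mem_image_of_mem Φ ha) (mem_image_of_mem Φ hb)
  have hle : ∀ d ∈ image2 (levelDist Φ r c) A B, c ≤ d :=
    forall_mem_image2.2 fun a ha b hb ↦
      (hA.1 (mem_image_of_mem r (mem_image_of_mem Φ ha))).trans
        (weight_le_levelDist (hne a ha b hb))
  refine csInf_eq_of_forall_ge_of_forall_gt_exists_lt ?_ hle fun s hs ↦ ?_
  · exact hA.nonempty.of_image.of_image.image2 hB.nonempty.of_image.of_image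
  · obtain ⟨_, ⟨_, ⟨a, ha, rfl⟩, rfl⟩, -, has⟩ := hA.exists_between hs
    obtain ⟨_, ⟨_, ⟨b, hb, rfl⟩, rfl⟩, -, hbs⟩ := hB.exists_between hs
    refine ⟨_, mem_image2_of_mem ha hb, ?_⟩
    rw [levelDist_of_ne (hne a ha b hb)]
    exact max_lt has hbs

theorem levelDist_no_best_proximity_pair (hc : 0 < c) (hr : ∀ x, c < r (Φ x))
    (hAB : Disjoint (Φ '' A) (Φ '' B))
    (hA : IsGLB (r '' (Φ '' A)) c) (hB : IsGLB (r '' (Φ '' B)) c) :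
    IsUltrametric (levelDist Φ r c) ∧ Proximinal (levelDist Φ r c) A ∧
      Proximinal (levelDist Φ r c) B ∧ SetDist (levelDist Φ r c) A B = c ∧
      ∀ a ∈ A, ∀ b ∈ B, c < levelDist Φ r c a b := by
  have hr' : ∀ x, c ≤ r (Φ x) := fun x ↦ (hr x).le
  have exists_le : ∀ C : Set X, IsGLB (r '' (Φ '' C)) c → ∀ x, ∃ a ∈ C, r (Φ a) ≤ r (Φ x) := by
    intro C hC x
    obtain ⟨_, ⟨_, ⟨a, ha, rfl⟩, rfl⟩, -, hax⟩ := hC.exists_between (hr x)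
    exact ⟨a, ha, hax.le⟩
  refine ⟨isUltrametric_levelDist hc hr', proximinal_levelDist hc.le hr' (exists_le A hA),
    proximinal_levelDist hc.le hr' (exists_le B hB), setDist_levelDist hAB hA hB,
    fun a ha b hb ↦ (hr a).trans_le (weight_le_levelDist ?_)⟩
  exact hAB.ne_of_mem (mem_image_of_mem Φ ha) (mem_image_of_mem Φ hb)

end LevelDist

/-- The weights `1 + 1 / n` of the paper's construction: they decrease to `1` without attaining it.
At `n = 0` the value is the junk value `1`, so level maps have to avoid `0`. -/
noncomputable def reciprocalWeight (n : ℕ) : ℝ :=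
  1 + 1 / (n : ℝ)

theorem one_lt_reciprocalWeight {n : ℕ} (hn : 0 < n) : 1 < reciprocalWeight n :=
  lt_add_of_pos_right _ (Nat.one_div_cast_pos hn.ne')

theorem tendsto_reciprocalWeight : Tendsto reciprocalWeight atTop (𝓝 1) := by
  have h := (tendsto_one_div_atTop_nhds_zero_nat (𝕜 := ℝ)).const_add 1
  rw [add_zero] at h
  exact h

theorem isGLB_image_reciprocalWeight {S : Set ℕ} (hS : ∃ᶠ n in atTop, n ∈ S) :
    IsGLB (reciprocalWeight '' S) 1 :=
  isGLB_image_of_frequently_of_tendsto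
    (fun n _ ↦ le_add_of_nonneg_right (Nat.one_div_cast_nonneg n)) hS tendsto_reciprocalWeight

theorem exists_range_eq_Ioi_zero (X : Type*) [Infinite X] : ∃ Φ : X → ℕ, range Φ = Ioi 0 := by
  let g := Function.invFun (Infinite.natEmbedding X)
  have hg : g.Surjective := Function.invFun_surjective (Infinite.natEmbedding X).injective
  exact ⟨Nat.succ ∘ g, (hg.range_comp _).trans Nat.range_succ⟩

theorem stmt16_general :
    (∀ (X : Type u) [Infinite X], ∃ (d : X → X → ℝ) (A B : Set X),
        IsUltrametric d ∧ Disjoint A B ∧ A.Infinite ∧ B.Infinite ∧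
        Proximinal d A ∧ Proximinal d B ∧
        ∀ a ∈ A, ∀ b ∈ B, SetDist d A B < d a b) ∧
    (∀ {X : Type u} {ι : Type*} {A B : Set X} {Φ : X → ι} {r : ι → ℝ} {c : ℝ}, 0 < c →
      (∀ x, c < r (Φ x)) → Disjoint (Φ '' A) (Φ '' B) →
      IsGLB (r '' (Φ '' A)) c → IsGLB (r '' (Φ '' B)) c →
      ∀ {d : X → X → ℝ},
        (∀ x, d x x = 0) →
        (∀ x y, x ≠ y → Φ x = Φ y → d x y = c) →
        (∀ x y, Φ x ≠ Φ y → d x y = max (r (Φ x)) (r (Φ y))) →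
        IsUltrametric d ∧ Proximinal d A ∧ Proximinal d B ∧
          SetDist d A B = c ∧ ∀ a ∈ A, ∀ b ∈ B, c < d a b) := by
  refine ⟨fun X _ ↦ ?_, fun hc hr hAB hA hB d hself heq hne ↦ ?_⟩
  · obtain ⟨Φ, hΦ⟩ := exists_range_eq_Ioi_zero X
    have frequently_image {S : Set ℕ} (hS : ∃ᶠ n in atTop, n ∈ S) :
        ∃ᶠ n in atTop, n ∈ Φ '' (Φ ⁻¹' S) := by
      rw [image_preimage_eq_inter_range, hΦ]
      exact hS.and_eventually (eventually_gt_atTop 0)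
    have hA : ∃ᶠ n in atTop, n ∈ Φ '' (Φ ⁻¹' {n | Even n}) := frequently_image Nat.frequently_even
    have hB : ∃ᶠ n in atTop, n ∈ Φ '' (Φ ⁻¹' {n | Odd n}) := frequently_image Nat.frequently_odd
    have hdisj := Nat.isCompl_even_odd.disjoint
    obtain ⟨hd, hproxA, hproxB, hdist, hlt⟩ := levelDist_no_best_proximity_pair one_pos
      (fun x ↦ one_lt_reciprocalWeight (hΦ.le (mem_range_self x)))
      (Disjoint.mono (image_preimage_subset Φ _) (image_preimage_subset Φ _) hdisj)
      (isGLB_image_reciprocalWeight hA) (isGLB_image_reciprocalWeight hB)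
    exact ⟨_, _, _, hd, hdisj.preimage Φ,
      .of_image Φ (Nat.frequently_atTop_iff_infinite.1 hA),
      .of_image Φ (Nat.frequently_atTop_iff_infinite.1 hB), hproxA, hproxB, by rwa [hdist]⟩
  · obtain rfl := eq_levelDist hself heq hne
    exact levelDist_no_best_proximity_pair hc hr hAB hA hB

/-- There exist an ultrametric space with disjoint infinite proximinal subsets `A`,
`B` such that `d a b > dist(A,B)` for all `a ∈ A`, `b ∈ B` (so no best proximity
pair exists); concretely, the function `d₁` built from a surjection `Φ` of
`X = A ∪ B` onto the positive integers sending `A` onto the positive even numbers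
and `B` onto the odd numbers is such an ultrametric, with `dist(A,B) = 1` and
`d₁ a b > 1` for all `a ∈ A`, `b ∈ B`. -/
theorem stmt16 :
    (∃ (X : Type u) (d : X → X → ℝ) (A B : Set X),
        IsUltrametric d ∧ Disjoint A B ∧ A.Infinite ∧ B.Infinite ∧
        Proximinal d A ∧ Proximinal d B ∧
        ∀ a ∈ A, ∀ b ∈ B, SetDist d A B < d a b) ∧
    (∀ (X : Type u) (A B : Set X), Disjoint A B → A ∪ B = Set.univ →
        A.Infinite → B.Infinite →
      ∀ Φ : X → ℕ, Φ '' A = {n : ℕ | 0 < n ∧ Even n} → Φ '' B = {n : ℕ | Odd n} →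
      ∀ d₁ : X → X → ℝ,
        (∀ x, d₁ x x = 0) →
        (∀ x y, x ≠ y → Φ x = Φ y → d₁ x y = 1) →
        (∀ x y, Φ x ≠ Φ y →
          d₁ x y = max (1 + 1 / (Φ x : ℝ)) (1 + 1 / (Φ y : ℝ))) →
        IsUltrametric d₁ ∧ Proximinal d₁ A ∧ Proximinal d₁ B ∧
          SetDist d₁ A B = 1 ∧ ∀ a ∈ A, ∀ b ∈ B, 1 < d₁ a b) := by
  refine ⟨⟨ULift ℕ, stmt16_general.{u, 0}.1 _⟩, fun X A B _ hU _ _ Φ hA hB d₁ ↦ ?_⟩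
  have hpos : ∀ x, 0 < Φ x := fun x ↦ (hU.ge (mem_univ x)).elim
    (fun hx ↦ (hA.le (mem_image_of_mem Φ hx)).1) (fun hx ↦ (hB.le (mem_image_of_mem Φ hx)).pos)
  have hpos_even : ∃ᶠ n : ℕ in atTop, 0 < n ∧ Even n :=
    (Nat.frequently_even.and_eventually (eventually_gt_atTop 0)).mono fun _ ↦ And.symm
  exact stmt16_general.2 one_pos (fun x ↦ one_lt_reciprocalWeight (hpos x))
    (hA ▸ hB ▸ Nat.isCompl_even_odd.disjoint.mono_left fun _ ↦ And.right)
    (hA ▸ isGLB_image_reciprocalWeight hpos_even)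
    (hB ▸ isGLB_image_reciprocalWeight Nat.frequently_odd)
end

section
/- Let G = G_{X,d}(A,B) be a proximinal graph for a semimetric space (X,d) with parts A and B. Define ρ : X × X → [0,∞) by ρ(x,y) = 0 if x = y and ρ(x,y) = 1/d(x,y) if x ≠ y. Then ρ is a semimetric on X, and G is a farthest graph for the semimetric space (X,ρ) with parts A and B. -/
open Set

section

variable {X : Type*} {d ρ : X → X → ℝ} {A B : Set X} {a b x y : X}

theorem eq_setDist_iff_forall_le (hbdd : BddBelow (image2 d A B)) (ha : a ∈ A) (hb : b ∈ B) :
    d a b = SetDist d A B ↔ ∀ x ∈ A, ∀ y ∈ B, d a b ≤ d x y := by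
  rw [← forall_mem_image2 (p := (d a b ≤ ·))]
  exact ⟨fun h _ hz => h.trans_le (csInf_le hbdd hz),
    fun h => (IsLeast.csInf_eq ⟨mem_image2_of_mem ha hb, h⟩).symm⟩

/- The convention `ρ x x = 0` is exactly the junk value `0⁻¹ = 0`, so no case split on `x = y`
is needed once `ρ` is written this way. -/
theorem eq_inv_of_eq_one_div_of_ne (hd : ∀ x, d x x = 0) (hρ₀ : ∀ x, ρ x x = 0)
    (hρ₁ : ∀ x y, x ≠ y → ρ x y = 1 / d x y) : ρ = fun x y => (d x y)⁻¹ := by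
  funext x y
  obtain rfl | hxy := eq_or_ne x y
  · rw [hρ₀, hd, inv_zero]
  · rw [hρ₁ x y hxy, one_div]

namespace IsSemimetric

theorem self_eq_zero (hd : IsSemimetric d) (x : X) : d x x = 0 :=
  (hd.eq_zero_iff x x).2 rfl

theorem pos_of_ne (hd : IsSemimetric d) (hxy : x ≠ y) : 0 < d x y :=
  (hd.nonneg x y).lt_of_ne' (mt (hd.eq_zero_iff x y).1 hxy)

theorem bddBelow_image2 (hd : IsSemimetric d) (A B : Set X) : BddBelow (image2 d A B) :=
  ⟨0, forall_mem_image2.2 fun x _ y _ => hd.nonneg x y⟩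

theorem inv (hd : IsSemimetric d) : IsSemimetric fun x y => (d x y)⁻¹ where
  nonneg x y := inv_nonneg.2 (hd.nonneg x y)
  symm x y := congrArg (·⁻¹) (hd.symm x y)
  eq_zero_iff x y := inv_eq_zero.trans (hd.eq_zero_iff x y)

theorem eq_setDist_iff_forall_inv_le (hd : IsSemimetric d) (hAB : Disjoint A B)
    (ha : a ∈ A) (hb : b ∈ B) :
    d a b = SetDist d A B ↔ ∀ x ∈ A, ∀ y ∈ B, (d x y)⁻¹ ≤ (d a b)⁻¹ := by
  have hpos {x y : X} (hx : x ∈ A) (hy : y ∈ B) : 0 < d x y :=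
    hd.pos_of_ne (hAB.ne_of_mem hx hy)
  rw [eq_setDist_iff_forall_le (hd.bddBelow_image2 A B) ha hb]
  exact forall₄_congr fun x hx y hy => (inv_le_inv₀ (hpos hx hy) (hpos ha hb)).symm

end IsSemimetric

end

theorem stmt17_general {X : Type*} (d : X → X → ℝ) (hd : IsSemimetric d)
    (G : SimpleGraph X) (A B : Set X) (hA : A.Nonempty) (hB : B.Nonempty) (hAB : Disjoint A B)
    (hedges : ∀ u v, G.Adj u v → (u ∈ A ∧ v ∈ B) ∨ (u ∈ B ∧ v ∈ A))
    (hadj : ∀ a ∈ A, ∀ b ∈ B, (G.Adj a b ↔ d a b = SetDist d A B))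
    (ρ : X → X → ℝ) (hρ₀ : ∀ x, ρ x x = 0)
    (hρ₁ : ∀ x y, x ≠ y → ρ x y = 1 / d x y) :
    IsSemimetric ρ ∧ FarthestFor ρ G A B := by
  obtain rfl := eq_inv_of_eq_one_div_of_ne hd.self_eq_zero hρ₀ hρ₁
  exact ⟨hd.inv, hA, hB, hAB, hedges, fun a ha b hb =>
    (hadj a ha b hb).trans (hd.eq_setDist_iff_forall_inv_le hAB ha hb)⟩

/-- Example 3.5 (first part): if `G = G_{X,d}(A,B)` is a proximinal graph for a
semimetric space `(X,d)` and `ρ x y = 1 / d x y` for `x ≠ y` (with `ρ x x = 0`),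
then `ρ` is a semimetric on `X` and `G` is a farthest graph for `(X,ρ)` with parts
`A` and `B`. -/
theorem stmt17 {X : Type*} (d : X → X → ℝ) (hd : IsSemimetric d)
    (G : SimpleGraph X) (A B : Set X) (hG : ProximinalFor d G A B)
    (ρ : X → X → ℝ) (hρ₀ : ∀ x, ρ x x = 0)
    (hρ₁ : ∀ x y, x ≠ y → ρ x y = 1 / d x y) :
    IsSemimetric ρ ∧ FarthestFor ρ G A B :=
  stmt17_general d hd G A B hG.nonemptyA hG.nonemptyB hG.disj hG.edges_between hG.adj_iff ρ hρ₀ hρ₁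
end
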